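/- Let n be an odd prime, m : ℕ, and let x : Fin m → ZMod n → ZMod n satisfy the promise. Define the integer W = Σ_{q : ZMod n} Σ_{k : ZMod n} (k.val) * β_{q,k}(x) + ((n² - n)/2) * (n - 1) * Σ_{q : ZMod n} β_{q,0}(x). Then W ≡ n * Σ_{a : ZMod n} (a.val) * m_{a,0}(x) (mod n²). -/

import Mathlib

/-!
Both sides are additive over the coordinates `i : Fin m`, so the congruence is checked on a single
column `p ↦ a + p * b`. Write `n = 2 t + 1`; then `(n² - n) / 2 = n t`.

* If `b ≠ 0`, the column is a permutation of `ZMod n`: its entries sum to `0 + 1 + ⋯ + (n - 1) = n t`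
  and exactly one of them is zero, so it contributes `n t + n t (n - 1) = n² t ≡ 0` to the left side,
  and nothing to the right side.
* If `b = 0`, the column is constantly `a`: its entries sum to `n a`, which is its contribution to the
  right side, and the number of zero entries is `0` or `n`, so the correction term is a multiple
  of `n t · n`.
-/

/-- The input `x` satisfies the promise if every coordinate column lies in the
span of `(1,…,1)` and `(0,1,…,n-1)`, i.e. has the form `p ↦ a + p * b`. -/
def SatisfiesPromise {n m : ℕ} (x : Fin m → ZMod n → ZMod n) : Prop :=
  ∀ i : Fin m, ∃ a b : ZMod n, ∀ p : ZMod n, x i p = a + p * b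

/-- `m_{a,b}(x)`: the number of coordinates `i` whose column is `p ↦ a + p * b`. -/
def mCard {n m : ℕ} [NeZero n] (x : Fin m → ZMod n → ZMod n) (a b : ZMod n) : ℕ :=
  (Finset.univ.filter (fun i : Fin m => ∀ p : ZMod n, x i p = a + p * b)).card

/-- `β_{p,k}(x)`: the number of coordinates of player `p`'s vector equal to `k`. -/
def betaCard {n m : ℕ} (x : Fin m → ZMod n → ZMod n) (p k : ZMod n) : ℕ :=
  (Finset.univ.filter (fun i : Fin m => x i p = k)).card

lemma sum_val_zmod (n t : ℕ) [NeZero n] (ht : n = 2 * t + 1) :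
    ∑ k : ZMod n, (k.val : ℤ) = n * t := by
  subst ht
  have h : ∑ k : ZMod (2 * t + 1), k.val = ∑ i ∈ Finset.range (2 * t + 1), i :=
    Fin.sum_univ_eq_sum_range (fun i => i) (2 * t + 1)
  have h2 := Finset.sum_range_id_mul_two (2 * t + 1)
  rw [← h, Nat.add_sub_cancel] at h2
  have h3 : ∑ k : ZMod (2 * t + 1), k.val = (2 * t + 1) * t := by linarith
  exact_mod_cast h3

/-- The congruence for a single column `y`, with `(n² - n) / 2` written as `n t`. -/
lemma column_congr (n t : ℕ) [Fact n.Prime] (ht : n = 2 * t + 1) (y : ZMod n → ZMod n)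
    (hy : ∃ a b : ZMod n, ∀ p, y p = a + p * b) :
    (∑ q, ((y q).val : ℤ)) + (n * t : ℤ) * ((n : ℤ) - 1) * ∑ q, (if y q = 0 then (1 : ℤ) else 0)
      ≡ (n : ℤ) * ∑ a : ZMod n, (a.val : ℤ) * (if ∀ p, y p = a + p * 0 then (1 : ℤ) else 0)
      [ZMOD (n : ℤ) ^ 2] := by
  obtain ⟨a, b, hy⟩ := hy
  by_cases hb : b = 0
  · subst hb
    have hya : ∀ q, y q = a := fun q => by simp [hy]
    simp only [hya, mul_zero, add_zero, Finset.sum_const, Finset.card_univ, ZMod.card,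
      forall_const, nsmul_eq_mul, mul_ite, mul_one, Finset.sum_ite_eq, Finset.mem_univ, if_true]
    rw [Int.modEq_iff_dvd]
    refine ⟨-(t * (n - 1) * (if a = 0 then (1 : ℤ) else 0)), ?_⟩
    split_ifs <;> ring
  · let e : ZMod n ≃ ZMod n := (Equiv.mulRight₀ b hb).trans (Equiv.addLeft a)
    have he : ∀ q, y q = e q := fun q => by simp [e, hy]
    have h1 : ∑ q, ((y q).val : ℤ) = n * t := by
      simp only [he]
      rw [Equiv.sum_comp e (fun k => (k.val : ℤ)), sum_val_zmod n t ht]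
    have h2 : ∑ q, (if y q = 0 then (1 : ℤ) else 0) = 1 := by
      simp only [he]
      rw [Equiv.sum_comp e (fun k => if k = 0 then (1 : ℤ) else 0)]
      simp
    -- A column with nonzero slope is not constant: it differs at `0` and `1`.
    have h3 : ∀ c : ZMod n, ¬ ∀ p, y p = c + p * 0 := by
      intro c hc
      have h0 := hc 0
      have h1 := hc 1
      rw [hy] at h0 h1
      apply hb
      linear_combination h1 - h0
    have h4 : ∑ a : ZMod n, (a.val : ℤ) * (if ∀ p, y p = a + p * 0 then (1 : ℤ) else 0) = 0 :=
      Finset.sum_eq_zero fun c _ => by rw [if_neg (h3 c), mul_zero]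
    rw [h1, h2, h4]
    rw [Int.modEq_iff_dvd]
    exact ⟨-t, by ring⟩

/-- For an odd prime `n` and a promise-satisfying input `x`, the integer
`W = ∑_q ∑_k k.val·β_{q,k}(x) + ((n²-n)/2)·(n-1)·∑_q β_{q,0}(x)` satisfies
`W ≡ n · ∑_a a.val · m_{a,0}(x)  (mod n²)`. -/
theorem stmt_8 (n : ℕ) [Fact n.Prime] (hodd : Odd n) (m : ℕ)
    (x : Fin m → ZMod n → ZMod n) (hx : SatisfiesPromise x)
    (W : ℤ)
    (hW : W = (∑ q : ZMod n, ∑ k : ZMod n, (k.val : ℤ) * (betaCard x q k : ℤ)) +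
      (((n ^ 2 - n) / 2 : ℕ) : ℤ) * ((n : ℤ) - 1) *
        ∑ q : ZMod n, (betaCard x q 0 : ℤ)) :
    W ≡ (n : ℤ) * ∑ a : ZMod n, (a.val : ℤ) * (mCard x a 0 : ℤ) [ZMOD (n : ℤ) ^ 2] := by
  obtain ⟨t, ht⟩ := hodd
  have hc : (n ^ 2 - n) / 2 = n * t := by
    have : n ^ 2 - n = 2 * (n * t) := by
      apply Nat.sub_eq_of_eq_add
      subst ht
      ring
    omega
  -- Exchange the sums over positions and values with the sum over coordinates.
  have hA : ∑ q : ZMod n, ∑ k : ZMod n, (k.val : ℤ) * (betaCard x q k : ℤ)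
      = ∑ i, ∑ q, ((x i q).val : ℤ) := by
    rw [Finset.sum_comm (s := (Finset.univ : Finset (Fin m)))]
    refine Finset.sum_congr rfl fun q _ => ?_
    simp only [betaCard, Finset.card_filter, Nat.cast_sum, Finset.mul_sum]
    rw [Finset.sum_comm]
    simp
  have hB : ∑ q : ZMod n, (betaCard x q 0 : ℤ)
      = ∑ i, ∑ q, (if x i q = 0 then (1 : ℤ) else 0) := by
    rw [Finset.sum_comm (s := (Finset.univ : Finset (Fin m)))]
    simp [betaCard]
  have hC : ∑ a : ZMod n, (a.val : ℤ) * (mCard x a 0 : ℤ)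
      = ∑ i, ∑ a : ZMod n, (a.val : ℤ) * (if ∀ p, x i p = a + p * 0 then (1 : ℤ) else 0) := by
    rw [Finset.sum_comm (s := (Finset.univ : Finset (Fin m)))]
    simp only [mCard, Finset.card_filter, Nat.cast_sum, Finset.mul_sum, Nat.cast_ite,
      Nat.cast_one, Nat.cast_zero]
  rw [hW, hA, hB, hC, hc, Finset.mul_sum, Finset.mul_sum, ← Finset.sum_add_distrib, Nat.cast_mul,
    Int.modEq_iff_dvd, ← Finset.sum_sub_distrib]
  exact Finset.dvd_sum fun i _ => (column_congr n t ht (x i) (hx i)).dvd
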